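/- Let n ≥ 2, let R = MvPowerSeries (Fin n) ℂ, and let f ∈ R be nonzero, a non-unit, and squarefree. Let J be the Jacobian ideal of f, namely the ideal of R generated by f together with all elements θ f for θ ∈ Derivation ℂ R R. If J is generated by a regular sequence of length 2 (i.e., there exist g, h ∈ R with J = Ideal.span {g, h}, g a nonzerodivisor on R, and h a nonzerodivisor on R ⧸ (g)), then the module of logarithmic derivations Der(−log f) is a free R-module of rank n. -/

import Mathlib

/-- Evaluation of a derivation at a fixed element `f`, as an `R`-linear map. -/
noncomputable def derEval {R : Type*} [CommRing R] [Algebra ℂ R] (f : R) :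
    Derivation ℂ R R →ₗ[R] R where
  toFun θ := θ f
  map_add' _ _ := Derivation.add_apply f
  map_smul' r θ := Derivation.smul_apply f r θ

/-- The module of logarithmic derivations `Der(−log f)`:
the `R`-submodule of derivations `θ` with `θ f ∈ (f)`. -/
noncomputable def logDer {R : Type*} [CommRing R] [Algebra ℂ R] (f : R) :
    Submodule R (Derivation ℂ R R) :=
  Submodule.comap (derEval f) (Ideal.span {f})

/-!
Sending `(a, θ)` to `a * f + θ f` maps the projective module `R × Derivation ℂ R R` onto the
Jacobian ideal, and its kernel is `Der(−log f)`. If the Jacobian ideal is generated by a regular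
sequence `g, h`, it is also the image of `R × R`, with kernel isomorphic to the colon ideal
`(g) : h = (g)`, which is free. By Schanuel's lemma `Der(−log f)` is then projective, so over a
local ring it is free, and its rank is that of `Derivation ℂ R R` because it contains
`f • Derivation ℂ R R`. A derivation of a power series ring is determined by its values on the
variables because the ring is separated for the adic topology of the ideal they generate.
-/

section LinearAlgebra

variable {R M N P Q : Type*} [Ring R] [AddCommGroup M] [Module R M] [AddCommGroup N]
  [Module R N] [AddCommGroup P] [Module R P] [AddCommGroup Q] [Module R Q]

theorem exists_comp_eq_of_range_le [Module.Projective R P] {φ : P →ₗ[R] N} {π : Q →ₗ[R] N}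
    (h : LinearMap.range φ ≤ LinearMap.range π) : ∃ α : P →ₗ[R] Q, π ∘ₗ α = φ := by
  have hφ : ∀ x, φ x ∈ LinearMap.range π := fun x => h (LinearMap.mem_range_self φ x)
  obtain ⟨α, hα⟩ := Module.projective_lifting_property π.rangeRestrict (φ.codRestrict _ hφ)
    π.surjective_rangeRestrict
  exact ⟨α, LinearMap.ext fun x => congrArg Subtype.val (LinearMap.congr_fun hα x)⟩

/-- With lifts `α : P → Q` of `φ` and `β : Q → P` of `π`, the retraction of `x ↦ (x, α x)` is
`(x, z) ↦ x - β (α x) + β z`. -/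
theorem exists_ker_retract_of_range_eq [Module.Projective R P] [Module.Projective R Q]
    {φ : P →ₗ[R] N} {π : Q →ₗ[R] N} (h : LinearMap.range φ = LinearMap.range π) :
    ∃ (i : LinearMap.ker φ →ₗ[R] P × LinearMap.ker π)
      (p : P × LinearMap.ker π →ₗ[R] LinearMap.ker φ), p ∘ₗ i = LinearMap.id := by
  obtain ⟨α, hα⟩ := exists_comp_eq_of_range_le h.le
  obtain ⟨β, hβ⟩ := exists_comp_eq_of_range_le h.ge
  replace hα : ∀ x, π (α x) = φ x := LinearMap.congr_fun hα
  replace hβ : ∀ y, φ (β y) = π y := LinearMap.congr_fun hβ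
  let i : LinearMap.ker φ →ₗ[R] P × LinearMap.ker π :=
    (LinearMap.ker φ).subtype.prod ((α ∘ₗ (LinearMap.ker φ).subtype).codRestrict _
      fun x => by simp [hα])
  let p : P × LinearMap.ker π →ₗ[R] LinearMap.ker φ :=
    ((LinearMap.id - β ∘ₗ α).coprod (β ∘ₗ (LinearMap.ker π).subtype)).codRestrict _
      fun x => by simp [hα, hβ]
  exact ⟨i, p, LinearMap.ext fun x => Subtype.ext (sub_add_cancel _ _)⟩

theorem projective_ker_of_range_eq [Module.Projective R P] [Module.Projective R Q]
    {φ : P →ₗ[R] N} {π : Q →ₗ[R] N} [Module.Projective R (LinearMap.ker π)]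
    (h : LinearMap.range φ = LinearMap.range π) : Module.Projective R (LinearMap.ker φ) := by
  obtain ⟨i, p, hpi⟩ := exists_ker_retract_of_range_eq h
  exact .of_split i p hpi

theorem finite_ker_of_range_eq [Module.Projective R P] [Module.Projective R Q]
    [Module.Finite R P] {φ : P →ₗ[R] N} {π : Q →ₗ[R] N} [Module.Finite R (LinearMap.ker π)]
    (h : LinearMap.range φ = LinearMap.range π) : Module.Finite R (LinearMap.ker φ) := by
  obtain ⟨i, p, hpi⟩ := exists_ker_retract_of_range_eq h
  exact .of_surjective p (LinearMap.surjective_of_comp_eq_id i p hpi)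

theorem map_snd_ker_coprod (u : M →ₗ[R] N) (v : P →ₗ[R] N) :
    (LinearMap.ker (u.coprod v)).map (LinearMap.snd R M P) = (LinearMap.range u).comap v := by
  ext x
  simp only [Submodule.mem_map, LinearMap.mem_ker, LinearMap.coprod_apply, LinearMap.snd_apply,
    Prod.exists, exists_eq_right, Submodule.mem_comap, LinearMap.mem_range]
  constructor
  · rintro ⟨a, ha⟩
    exact ⟨-a, by rw [map_neg, neg_eq_of_add_eq_zero_right ha]⟩
  · rintro ⟨a, ha⟩
    exact ⟨-a, by rw [map_neg, ha, neg_add_cancel]⟩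

/-- The second projection identifies the kernel of `(a, x) ↦ u a + v x`, for injective `u`, with
`v ⁻¹ (range u)`. -/
noncomputable def kerCoprodEquivComap {u : M →ₗ[R] N} (hu : Function.Injective u)
    (v : P →ₗ[R] N) : LinearMap.ker (u.coprod v) ≃ₗ[R] (LinearMap.range u).comap v :=
  (LinearEquiv.ofInjective (LinearMap.snd R M P ∘ₗ (LinearMap.ker (u.coprod v)).subtype) (by
    rw [injective_iff_map_eq_zero]
    rintro ⟨⟨a, x⟩, hax⟩ (rfl : x = 0)
    have ha : u a = 0 := by simpa using hax
    simpa using (map_eq_zero_iff u hu).1 ha)).trans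
  (LinearEquiv.ofEq _ _ (by
    rw [LinearMap.range_comp, Submodule.range_subtype, map_snd_ker_coprod]))

theorem rank_eq_of_forall_smul_mem {R M : Type*} [CommRing R] [AddCommGroup M] [Module R M]
    {S : Submodule R M} {r : R} (hr : IsSMulRegular M r)
    (hS : ∀ x : M, r • x ∈ S) : Module.rank R S = Module.rank R M :=
  (Submodule.rank_le S).antisymm <|
    LinearMap.rank_le_of_injective ((LinearMap.lsmul R M r).codRestrict S hS) fun _ _ hxy =>
      hr (congrArg Subtype.val hxy)

end LinearAlgebra

section RegularSequence

variable {R : Type*} [CommRing R] {g h : R}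

theorem injective_toSpanSingleton_of_isSMulRegular (hg : IsSMulRegular R g) :
    Function.Injective (LinearMap.toSpanSingleton R R g) := fun a b hab =>
  hg (by simpa [mul_comm] using hab)

theorem comap_toSpanSingleton_span_singleton (hh : IsSMulRegular (R ⧸ Ideal.span {g}) h) :
    Submodule.comap (LinearMap.toSpanSingleton R R h) (Ideal.span {g}) = Ideal.span {g} := by
  ext b
  rw [Submodule.mem_comap, LinearMap.toSpanSingleton_apply, smul_eq_mul]
  refine ⟨fun hb => mem_of_isSMulRegular_quotient_of_smul_mem hh ?_, Ideal.mul_mem_right h _⟩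
  rwa [smul_eq_mul, mul_comm]

/-- The map `(a, b) ↦ a * g + b * h`, the last differential of the Koszul complex of `g, h`. -/
noncomputable def koszulMap (g h : R) : R × R →ₗ[R] R :=
  (LinearMap.toSpanSingleton R R g).coprod (LinearMap.toSpanSingleton R R h)

theorem range_koszulMap (g h : R) : LinearMap.range (koszulMap g h) = Ideal.span {g, h} := by
  rw [koszulMap, LinearMap.range_coprod, LinearMap.range_toSpanSingleton,
    LinearMap.range_toSpanSingleton, Ideal.span_insert]

/-- For a regular sequence `g, h`, the kernel of the Koszul map is the colon ideal
`(g) : h = (g)`, hence free of rank one. -/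
noncomputable def kerKoszulMapEquiv (hg : IsSMulRegular R g)
    (hh : IsSMulRegular (R ⧸ Ideal.span {g}) h) : LinearMap.ker (koszulMap g h) ≃ₗ[R] R :=
  (kerCoprodEquivComap (injective_toSpanSingleton_of_isSMulRegular hg) _).trans <|
    (LinearEquiv.ofEq _ _ (by
      rw [LinearMap.range_toSpanSingleton, comap_toSpanSingleton_span_singleton hh])).trans
    (LinearEquiv.ofInjective _ (injective_toSpanSingleton_of_isSMulRegular hg)).symm

end RegularSequence

section LogarithmicDerivations

variable {R : Type*} [CommRing R] [Algebra ℂ R]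

/-- The Jacobian ideal of `f`, generated by `f` and all its derivatives. -/
def jacobianIdeal (f : R) : Ideal R :=
  Ideal.span ({f} ∪ {k | ∃ θ : Derivation ℂ R R, θ f = k})

/-- The map `(a, θ) ↦ a * f + θ f`, whose image is the Jacobian ideal of `f`. -/
noncomputable def jacobianMap (f : R) : R × Derivation ℂ R R →ₗ[R] R :=
  (LinearMap.toSpanSingleton R R f).coprod (derEval f)

theorem range_jacobianMap (f : R) : LinearMap.range (jacobianMap f) = jacobianIdeal f := by
  have hder : Ideal.span {k | ∃ θ : Derivation ℂ R R, θ f = k} = LinearMap.range (derEval f) :=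
    Submodule.span_eq (LinearMap.range (derEval f))
  rw [jacobianMap, LinearMap.range_coprod, LinearMap.range_toSpanSingleton, jacobianIdeal,
    Ideal.span_union, hder]

/-- The kernel of the Jacobian map of a regular element `f` is `Der(−log f)`. -/
noncomputable def kerJacobianMapEquiv {f : R} (hf : IsSMulRegular R f) :
    LinearMap.ker (jacobianMap f) ≃ₗ[R] logDer f :=
  (kerCoprodEquivComap (injective_toSpanSingleton_of_isSMulRegular hf) _).trans <|
    LinearEquiv.ofEq _ _ (by rw [LinearMap.range_toSpanSingleton, logDer])

theorem smul_mem_logDer (f : R) (θ : Derivation ℂ R R) : f • θ ∈ logDer f :=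
  Ideal.mul_mem_right _ _ (Ideal.mem_span_singleton_self f)

theorem rank_logDer [Module.Flat R (Derivation ℂ R R)] {f : R} (hf : f ∈ nonZeroDivisors R) :
    Module.rank R (logDer f) = Module.rank R (Derivation ℂ R R) :=
  rank_eq_of_forall_smul_mem (Module.Flat.isSMulRegular_of_nonZeroDivisors hf) (smul_mem_logDer f)

theorem projective_and_finite_logDer [Module.Projective R (Derivation ℂ R R)]
    [Module.Finite R (Derivation ℂ R R)] {f g h : R} (hf : IsSMulRegular R f)
    (hJ : jacobianIdeal f = Ideal.span {g, h})
    (hg : IsSMulRegular R g) (hh : IsSMulRegular (R ⧸ Ideal.span {g}) h) :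
    Module.Projective R (logDer f) ∧ Module.Finite R (logDer f) := by
  have hrange : LinearMap.range (jacobianMap f) = LinearMap.range (koszulMap g h) := by
    rw [range_jacobianMap, hJ, range_koszulMap]
  have : Module.Projective R (LinearMap.ker (koszulMap g h)) :=
    .of_equiv (kerKoszulMapEquiv hg hh).symm
  have : Module.Finite R (LinearMap.ker (koszulMap g h)) := .equiv (kerKoszulMapEquiv hg hh).symm
  have := projective_ker_of_range_eq hrange
  have := finite_ker_of_range_eq hrange
  exact ⟨.of_equiv (kerJacobianMapEquiv hf), .equiv (kerJacobianMapEquiv hf)⟩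

theorem logDer_free_of_jacobian_complete_intersection_general [IsLocalRing R]
    [Module.Projective R (Derivation ℂ R R)] [Module.Finite R (Derivation ℂ R R)] {f g h : R}
    (hf : f ∈ nonZeroDivisors R) (hJ : jacobianIdeal f = Ideal.span {g, h})
    (hg : IsSMulRegular R g) (hh : IsSMulRegular (R ⧸ Ideal.span {g}) h) :
    Module.Free R (logDer f) ∧
      Module.rank R (logDer f) = Module.rank R (Derivation ℂ R R) := by
  obtain ⟨_, _⟩ := projective_and_finite_logDer
    (Module.Flat.isSMulRegular_of_nonZeroDivisors hf) hJ hg hh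
  exact ⟨Module.free_of_flat_of_isLocalRing, rank_logDer hf⟩

end LogarithmicDerivations

section PowerSeries

open MvPowerSeries

theorem derivation_eq_zero_of_isHausdorff {k A M : Type*} [CommRing k] [CommRing A] [Algebra k A]
    [AddCommGroup M] [Module k M] [Module A M] (s : Set A) [IsHausdorff (Ideal.span s) M]
    (hs : ∀ a, ∃ c : k, a - algebraMap k A c ∈ Ideal.span s) {D : Derivation k A M}
    (hD : ∀ x ∈ s, D x = 0) : D = 0 := by
  have hpow : ∀ (n : ℕ) (a : A), D a ∈ (Ideal.span s ^ n • ⊤ : Submodule A M) := by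
    intro n
    induction n with
    | zero => simp
    | succ n ih =>
      have hspan : ∀ b ∈ Ideal.span s, D b ∈ (Ideal.span s ^ (n + 1) • ⊤ : Submodule A M) := by
        intro b hb
        induction hb using Submodule.span_induction with
        | mem x hx => simp [hD x hx]
        | zero => simp
        | add x y _ _ ihx ihy =>
          rw [map_add]
          exact add_mem ihx ihy
        | smul a x hx ihx =>
          rw [smul_eq_mul, D.leibniz]
          refine add_mem (Submodule.smul_mem _ a ihx) ?_
          rw [pow_succ', Submodule.mul_smul]
          exact Submodule.smul_mem_smul hx (ih a)
      intro a
      obtain ⟨c, hc⟩ := hs a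
      simpa using hspan _ hc
  ext a
  exact IsHausdorff.haus (I := Ideal.span s) ‹_› _ fun n => SModEq.zero.2 (hpow n a)

variable {σ k : Type*} [CommRing k]

theorem evalOneₐ_toAdicCompletion [Finite σ] (f : MvPowerSeries σ k) :
    AdicCompletion.evalOneₐ (MvPolynomial.idealOfVars σ k) (toAdicCompletion σ k f) =
      Ideal.Quotient.mk _ (truncTotal 1 f) :=
  rfl

theorem mem_span_range_X_of_constantCoeff_eq_zero [Finite σ] {f : MvPowerSeries σ k}
    (hf : constantCoeff f = 0) : f ∈ Ideal.span (Set.range (X : σ → MvPowerSeries σ k)) := by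
  let e := (toAdicCompletionAlgEquiv σ k).toRingEquiv
  have hX : (Ideal.span (Set.range (X : σ → MvPowerSeries σ k))).map e =
      (MvPolynomial.idealOfVars σ k).map (algebraMap _ _) := by
    simp_rw [MvPolynomial.idealOfVars, Ideal.map_span, ← Set.range_comp]
    congr 2
    ext1
    simp [e, AdicCompletion.algebraMap_apply, ← MvPolynomial.coe_X, toAdicCompletion_coe]
  have htrunc : truncTotal 1 f = 0 := by
    ext m
    by_cases hm : m.degree < 1
    · obtain rfl : m = 0 := by simpa [Finsupp.degree_eq_zero_iff] using hm
      simpa [coeff_truncTotal _ hm] using hf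
    · exact coeff_truncTotal_eq_zero _ (not_lt.1 hm)
  have hker : e f ∈ RingHom.ker (AdicCompletion.evalOneₐ (MvPolynomial.idealOfVars σ k)) := by
    change AdicCompletion.evalOneₐ _ (toAdicCompletion σ k f) = 0
    rw [evalOneₐ_toAdicCompletion, htrunc, map_zero]
  rw [← Ideal.comap_map_of_bijective e e.bijective (I := Ideal.span _), Ideal.mem_comap, hX]
  exact (AdicCompletion.ker_evalOneₐ_eq_map _ (MvPolynomial.idealOfVars_fg σ k)).le hker

theorem derivation_mvPowerSeries_ext [Finite σ]
    {D₁ D₂ : Derivation k (MvPowerSeries σ k) (MvPowerSeries σ k)}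
    (h : ∀ i, D₁ (X i) = D₂ (X i)) : D₁ = D₂ := by
  rw [← sub_eq_zero]
  refine derivation_eq_zero_of_isHausdorff (Set.range X) (fun f => ⟨constantCoeff f, ?_⟩) ?_
  · exact mem_span_range_X_of_constantCoeff_eq_zero (by simp [← c_eq_algebraMap])
  · simp [h]

theorem sum_smul_pderiv_X [Fintype σ] (a : σ → MvPowerSeries σ k) (j : σ) :
    (∑ i, a i • pderiv k i) (X j) = a j := by
  classical
  rw [← Derivation.coeFnAddMonoidHom_apply, map_sum, Finset.sum_apply]
  simp [pderiv_X, Pi.single_apply]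

variable (σ k) in
/-- The basis of the derivations of a power series ring given by the partial derivatives. -/
noncomputable def pderivBasis [Fintype σ] :
    Module.Basis σ (MvPowerSeries σ k) (Derivation k (MvPowerSeries σ k) (MvPowerSeries σ k)) :=
  .ofEquivFun
    { toFun := fun D i => D (X i)
      map_add' := fun _ _ => rfl
      map_smul' := fun _ _ => rfl
      invFun := fun a => ∑ i, a i • pderiv k i
      left_inv := fun _ => derivation_mvPowerSeries_ext (sum_smul_pderiv_X _)
      right_inv := fun a => funext (sum_smul_pderiv_X a) }

instance free_derivation_mvPowerSeries [Finite σ] : Module.Free (MvPowerSeries σ k)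
    (Derivation k (MvPowerSeries σ k) (MvPowerSeries σ k)) :=
  have := Fintype.ofFinite σ
  .of_basis (pderivBasis σ k)

instance finite_derivation_mvPowerSeries [Finite σ] : Module.Finite (MvPowerSeries σ k)
    (Derivation k (MvPowerSeries σ k) (MvPowerSeries σ k)) :=
  have := Fintype.ofFinite σ
  .of_basis (pderivBasis σ k)

theorem rank_derivation_mvPowerSeries [Fintype σ] [Nontrivial k] : Module.rank (MvPowerSeries σ k)
    (Derivation k (MvPowerSeries σ k) (MvPowerSeries σ k)) = Fintype.card σ :=
  rank_eq_card_basis (pderivBasis σ k)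

end PowerSeries

theorem logDer_free_of_jacobian_complete_intersection (n : ℕ) (hn : 2 ≤ n)
    (f : MvPowerSeries (Fin n) ℂ) (hf0 : f ≠ 0) (hfu : ¬ IsUnit f)
    (hsq : Squarefree f)
    (J : Ideal (MvPowerSeries (Fin n) ℂ))
    (hJ : J = Ideal.span ({f} ∪ { k : MvPowerSeries (Fin n) ℂ |
      ∃ θ : Derivation ℂ (MvPowerSeries (Fin n) ℂ) (MvPowerSeries (Fin n) ℂ), θ f = k }))
    (hreg : ∃ g h : MvPowerSeries (Fin n) ℂ,
      J = Ideal.span {g, h} ∧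
      (∀ x : MvPowerSeries (Fin n) ℂ, g * x = 0 → x = 0) ∧
      (∀ y : MvPowerSeries (Fin n) ℂ ⧸ Ideal.span {g},
        Ideal.Quotient.mk (Ideal.span {g}) h * y = 0 → y = 0)) :
    Module.Free (MvPowerSeries (Fin n) ℂ) (↥(logDer f)) ∧
      Module.rank (MvPowerSeries (Fin n) ℂ) (↥(logDer f)) = n := by
  obtain ⟨g, h, hgh, hg, hh⟩ := hreg
  simpa [rank_derivation_mvPowerSeries] using
    logDer_free_of_jacobian_complete_intersection_general (mem_nonZeroDivisors_of_ne_zero hf0)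
      (hJ.symm.trans hgh) (.of_right_eq_zero_of_smul hg) (.of_right_eq_zero_of_smul hh)
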